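/- For each integer i ≥ 0 and real x > 0, the function y ↦ g_i(y) − g_i(x+y) is nonincreasing on (0, ∞), where g_i(y) = yk·C(1/(2^i y), r) and C(·,r) is the extended binomial coefficient. -/

import Mathlib

/-- The extended binomial coefficient: `z(z-1)⋯(z-r+1)/r!` when `z ≥ r-1`, and `0` otherwise. -/
noncomputable def extBinom (z : ℝ) (r : ℕ) : ℝ :=
  if (r : ℝ) - 1 ≤ z then (∏ j ∈ Finset.range r, (z - (j : ℝ))) / (Nat.factorial r) else 0

/-- `g_i(y) = y k C(1/(2^i y), r)` -/
noncomputable def gi (k r i : ℕ) (y : ℝ) : ℝ :=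
  y * (k : ℝ) * extBinom (1 / (2 ^ i * y)) r

/-- A finite product of nonnegative antitone convex functions is convex. -/
theorem convexOn_prod_of_antitoneOn {ι : Type*} (t : Finset ι) {s : Set ℝ} (hs : Convex ℝ s)
    (f : ι → ℝ → ℝ) (h0 : ∀ j, ∀ y ∈ s, 0 ≤ f j y) (ha : ∀ j, AntitoneOn (f j) s)
    (hc : ∀ j, ConvexOn ℝ s (f j)) :
    ConvexOn ℝ s (fun y => ∏ j ∈ t, f j y) := by
  classical
  induction t using Finset.induction_on with
  | empty => simpa using convexOn_const (1 : ℝ) hs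
  | insert a t hat ih =>
    have hanti : AntitoneOn (fun y => ∏ j ∈ t, f j y) s := fun y hy z hz hyz =>
      Finset.prod_le_prod (fun j _ => h0 j z hz) (fun j _ => ha j hy hz hyz)
    have hmul := (hc a).mul ih (fun y hy => h0 a y hy)
      (fun y hy => Finset.prod_nonneg fun j _ => h0 j y hy) ((ha a).monovaryOn hanti)
    refine hmul.congr fun y _ => ?_
    simp [Finset.prod_insert hat]

/-- The extended binomial coefficient as a product of positive parts. -/
theorem extBinom_eq_prod_max (z : ℝ) (r : ℕ) :
    extBinom z (r + 1) = (∏ j ∈ Finset.range (r + 1), max (z - j) 0) / (r + 1).factorial := by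
  unfold extBinom
  split_ifs with h
  · congr 1
    refine Finset.prod_congr rfl fun j hj => (max_eq_left ?_).symm
    have hjr : (j : ℝ) ≤ r := by exact_mod_cast Nat.lt_succ_iff.mp (Finset.mem_range.mp hj)
    push_cast at h
    linarith
  · push_cast at h
    rw [Finset.prod_range_succ, max_eq_right (by linarith : z - r ≤ 0)]
    simp

/-- `g_i` is convex on the positive reals. -/
theorem convexOn_gi (k r i : ℕ) : ConvexOn ℝ (Set.Ioi 0) (gi k (r + 1) i) := by
  have hinv : ConvexOn ℝ (Set.Ioi (0 : ℝ)) (fun y : ℝ => 1 / (2 ^ i * y)) := by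
    have h : ConvexOn ℝ (Set.Ioi (0 : ℝ)) (fun y : ℝ => y⁻¹) := by
      simpa using convexOn_zpow (𝕜 := ℝ) (-1)
    refine (h.smul (c := (1 / 2 ^ i : ℝ)) (by positivity)).congr fun y _ => ?_
    simp [mul_comm]
  have hprod := convexOn_prod_of_antitoneOn (Finset.range r) (convex_Ioi (0 : ℝ))
    (fun j y => max (1 / (2 ^ i * y) - ((j + 1 : ℕ) : ℝ)) 0)
    (fun j y _ => le_max_right _ _)
    (fun j y hy z hz hyz => by
      have hy' : 0 < y := hy
      dsimp only
      gcongr)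
    (fun j => (hinv.sub (concaveOn_const _ (convex_Ioi 0))).sup (convexOn_const 0 (convex_Ioi 0)))
  refine (hprod.smul (c := (k / (2 ^ i * (r + 1).factorial) : ℝ)) (by positivity)).congr
    fun y hy => ?_
  have hy' : 0 < y := hy
  have hpos : 0 ≤ 1 / (2 ^ i * y) - ((0 : ℕ) : ℝ) := by
    rw [Nat.cast_zero, sub_zero]
    positivity
  simp only [gi, smul_eq_mul]
  rw [extBinom_eq_prod_max, Finset.prod_range_succ', max_eq_left hpos, Nat.cast_zero, sub_zero]
  field_simp

/-- The increments of a convex function over intervals of fixed length are nondecreasing. -/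
theorem ConvexOn.sub_add_left_le_sub {s : Set ℝ} {f : ℝ → ℝ} (hf : ConvexOn ℝ s f)
    {x y₁ y₂ : ℝ} (hx : 0 < x) (hy : y₁ ≤ y₂) (h₁ : y₁ ∈ s) (h₂ : x + y₂ ∈ s) :
    f y₂ - f (x + y₂) ≤ f y₁ - f (x + y₁) := by
  have hd : 0 < x + y₂ - y₁ := by linarith
  have ha : 0 ≤ x / (x + y₂ - y₁) := by positivity
  have hb : 0 ≤ (y₂ - y₁) / (x + y₂ - y₁) := div_nonneg (by linarith) hd.le
  have hab : x / (x + y₂ - y₁) + (y₂ - y₁) / (x + y₂ - y₁) = 1 := by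
    field_simp
    ring
  have e₁ := hf.2 h₁ h₂ ha hb hab
  have e₂ := hf.2 h₁ h₂ hb ha (by rw [add_comm, hab])
  simp only [smul_eq_mul] at e₁ e₂
  have p₁ : x / (x + y₂ - y₁) * y₁ + (y₂ - y₁) / (x + y₂ - y₁) * (x + y₂) = y₂ := by
    field_simp
    ring
  have p₂ : (y₂ - y₁) / (x + y₂ - y₁) * y₁ + x / (x + y₂ - y₁) * (x + y₂) = x + y₁ := by
    field_simp
    ring
  rw [p₁] at e₁
  rw [p₂] at e₂
  linear_combination e₁ + e₂ + (f y₁ + f (x + y₂)) * hab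

theorem gi_diff_antitone (k r i : ℕ) (hr : 3 ≤ r) (hk : r ≤ k) (x : ℝ) (hx : 0 < x) :
    ∀ y₁ y₂ : ℝ, 0 < y₁ → y₁ ≤ y₂ →
      gi k r i y₂ - gi k r i (x + y₂) ≤ gi k r i y₁ - gi k r i (x + y₁) := by
  intro y₁ y₂ h₁ h
  obtain ⟨m, rfl⟩ : ∃ m, r = m + 1 := ⟨r - 1, by omega⟩
  exact (convexOn_gi k m i).sub_add_left_le_sub hx h h₁
    (Set.mem_Ioi.mpr (by linarith))
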